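/- Let X be an infinite compact metric space, let α_1, …, α_d be pairwise commuting homeomorphisms of X, let μ be a strictly positive Borel probability measure on X invariant under the action of α_1, …, α_d, and suppose that α_1 is minimal and that μ is the unique α_1-invariant Borel probability measure on X. Then there exist: a compact metrizable space Y homeomorphic to the Cantor space {0,1}^ℕ; pairwise commuting homeomorphisms β_1, …, β_d of Y with β_1 minimal; a Borel probability measure ν on Y invariant under the action of β_1, …, β_d such that ν is the unique β_1-invariant Borel probability measure on Y; and a continuous surjection s : Y → X such that s ∘ β_j = α_j ∘ s for every j = 1, …, d and the pushforward measure s_*ν equals μ. -/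

import Mathlib

/-- A bundled compact metric space equipped with its Borel σ-algebra. -/
structure CompactMetricBundle where
  carrier : Type
  [metricSpace : MetricSpace carrier]
  [compactSpace : CompactSpace carrier]
  [measurableSpace : MeasurableSpace carrier]
  [borelSpace : BorelSpace carrier]

attribute [instance] CompactMetricBundle.metricSpace CompactMetricBundle.compactSpace
  CompactMetricBundle.measurableSpace CompactMetricBundle.borelSpace

open MeasureTheory

/-- A homeomorphism is minimal if its only closed invariant sets are `∅` and the whole
space. -/
def IsMinimalHomeo {Y : Type*} [TopologicalSpace Y] (β : Y ≃ₜ Y) : Prop :=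
  ∀ F : Set Y, IsClosed F → β '' F = F → F = ∅ ∨ F = Set.univ

/-!
Choose countably many balls `U i` with `μ`-null boundaries which separate the points of `X`, and
let `Γ` be the countable group acting on `X`. Almost every point is regular: its orbit avoids all
these boundaries. Coding the orbit of a regular point by the times at which it visits each `U i`
and closing up the graph of this coding gives a zero-dimensional extension of `X` whose fibres over
the regular points are singletons. The points alone in their fibre are dense in the extension, so
it inherits minimality from `X`; an infinite minimal system has no isolated points, so by Brouwer's
theorem the extension is a Cantor space. Since almost every fibre is a singleton, `μ` has exactly
one lift `ν`. The images of `ν` under the action are lifts of `μ`, so `ν` is invariant; any other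
measure invariant under the minimal homeomorphism projects to `μ` by unique ergodicity, so it
is `ν`.
-/

open Set Function Topology TopologicalSpace

section Brouwer

variable {Y : Type*} [TopologicalSpace Y]

/-- A rule cutting every nonempty clopen set `A` at stage `n` into the nonempty pieces `A ⊓ S n A`
and `A \ S n A`, and doing so along `C n` whenever `C n` cuts `A`. -/
structure IsSplittingRule (C : ℕ → Clopens Y) (S : ℕ → Clopens Y → Clopens Y) : Prop where
  inter_nonempty : ∀ n (A : Clopens Y), (A : Set Y).Nonempty → (A ∩ S n A : Set Y).Nonempty
  diff_nonempty : ∀ n (A : Clopens Y), (A : Set Y).Nonempty → (A \ S n A : Set Y).Nonempty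
  separates : ∀ n (A : Clopens Y), ∀ y ∈ A, ∀ z ∈ A, y ∈ C n → z ∉ C n → y ∈ S n A ∧ z ∉ S n A

theorem exists_clopens_split [TotallySeparatedSpace Y] [PerfectSpace Y] (C A : Clopens Y) :
    ∃ S : Clopens Y, ((A : Set Y).Nonempty → (A ∩ S : Set Y).Nonempty) ∧
      ((A : Set Y).Nonempty → (A \ S : Set Y).Nonempty) ∧
      ∀ y ∈ A, ∀ z ∈ A, y ∈ C → z ∉ C → y ∈ S ∧ z ∉ S := by
  by_cases hC : (A ∩ C : Set Y).Nonempty ∧ (A \ C : Set Y).Nonempty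
  · exact ⟨C, fun _ => hC.1, fun _ => hC.2, fun _ _ _ _ hy hz => ⟨hy, hz⟩⟩
  have not_cut : ∀ y ∈ A, ∀ z ∈ A, y ∈ C → z ∉ C → False :=
    fun y hyA z hzA hyC hzC => hC ⟨⟨y, hyA, hyC⟩, ⟨z, hzA, hzC⟩⟩
  by_cases hA : (A : Set Y).Nonempty
  · obtain ⟨y, hy⟩ := hA
    obtain ⟨z, hz, hzy⟩ : ∃ z ∈ (A : Set Y), z ≠ y :=
      ((accPt_iff_nhds.1 (PerfectSpace.univ_preperfect y (mem_univ y))) A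
        (A.isClopen.isOpen.mem_nhds hy)).imp fun z hz => ⟨hz.1.1, hz.2⟩
    obtain ⟨S, hS, hzS, hyS⟩ := exists_isClopen_of_totally_separated hzy
    exact ⟨⟨S, hS⟩, fun _ => ⟨z, hz, hzS⟩, fun _ => ⟨y, hy, hyS⟩,
      fun y hyA z hzA hyC hzC => (not_cut y hyA z hzA hyC hzC).elim⟩
  · exact ⟨⊥, fun h => (hA h).elim, fun h => (hA h).elim,
      fun y hyA z hzA hyC hzC => (not_cut y hyA z hzA hyC hzC).elim⟩

theorem exists_isSplittingRule [TotallySeparatedSpace Y] [PerfectSpace Y] (C : ℕ → Clopens Y) :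
    ∃ S, IsSplittingRule C S := by
  choose S hinter hdiff hsep using fun n => exists_clopens_split (C n)
  exact ⟨S, hinter, hdiff, hsep⟩

/-- The clopen set reached from the whole space by repeatedly splitting with `S`. The most recent
choice is the head of the list, as in `PiNat.res`. -/
def splittingCell (S : ℕ → Clopens Y → Clopens Y) : List Bool → Clopens Y
  | [] => ⊤
  | true :: l => splittingCell S l ⊓ S l.length (splittingCell S l)
  | false :: l => splittingCell S l \ S l.length (splittingCell S l)

/-- The index of the `n`-th generation cell containing `y`. -/
noncomputable def splittingAddress (S : ℕ → Clopens Y → Clopens Y) (y : Y) : ℕ → List Bool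
  | 0 => []
  | n + 1 => (S n (splittingCell S (splittingAddress S y n)) : Set Y).boolIndicator y ::
      splittingAddress S y n

/-- The branch of cells containing `y`: the homeomorphism onto the Cantor space. -/
noncomputable def splittingCode (S : ℕ → Clopens Y → Clopens Y) (y : Y) (n : ℕ) : Bool :=
  (S n (splittingCell S (splittingAddress S y n)) : Set Y).boolIndicator y

variable {C : ℕ → Clopens Y} {S : ℕ → Clopens Y → Clopens Y}

theorem res_splittingCode (y : Y) (n : ℕ) :
    PiNat.res (splittingCode S y) n = splittingAddress S y n := by
  induction n with
  | zero => rfl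
  | succ n ih => rw [PiNat.res_succ, ih]; rfl

theorem length_splittingAddress (y : Y) (n : ℕ) : (splittingAddress S y n).length = n := by
  rw [← res_splittingCode, PiNat.res_length]

theorem mem_splittingCell_iff {y : Y} {l : List Bool} :
    y ∈ splittingCell S l ↔ splittingAddress S y l.length = l := by
  induction l with
  | nil => exact iff_of_true (mem_univ y) rfl
  | cons b l ih =>
    have hmem : y ∈ splittingCell S (b :: l) ↔ y ∈ splittingCell S l ∧
        (S l.length (splittingCell S l) : Set Y).boolIndicator y = b := by
      cases b
      · exact and_congr_right' (notMem_iff_boolIndicator _ y)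
      · exact and_congr_right' (mem_iff_boolIndicator _ y)
    rw [hmem, ih, List.length_cons, splittingAddress, List.cons.injEq, and_comm]
    exact and_congr_left fun haddr => by rw [haddr]

theorem IsSplittingRule.nonempty_splittingCell [Nonempty Y] (hS : IsSplittingRule C S)
    (l : List Bool) : (splittingCell S l : Set Y).Nonempty := by
  induction l with
  | nil => exact univ_nonempty
  | cons b l ih =>
    cases b
    · exact hS.diff_nonempty _ _ ih
    · exact hS.inter_nonempty _ _ ih

theorem antitone_splittingCell_res (b : ℕ → Bool) :
    Antitone fun n => (splittingCell S (PiNat.res b n) : Set Y) := by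
  refine antitone_nat_of_succ_le fun n => ?_
  rw [PiNat.res_succ]
  cases b n
  · exact sdiff_subset
  · exact inter_subset_left

theorem continuous_splittingCode : Continuous (splittingCode S) := by
  have isLocallyConstant_address (n : ℕ) : IsLocallyConstant fun y => splittingAddress S y n := by
    refine (IsLocallyConstant.iff_exists_open _).2 fun y =>
      ⟨splittingCell S (splittingAddress S y n), (Clopens.isClopen _).isOpen,
        mem_splittingCell_iff.2 (by rw [length_splittingAddress]), fun z hz => ?_⟩
    simpa only [length_splittingAddress] using mem_splittingCell_iff.1 hz
  exact continuous_pi fun n => ((isLocallyConstant_address (n + 1)).comp List.headI).continuous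

theorem IsSplittingRule.injective_splittingCode [TotallySeparatedSpace Y]
    (hC : Surjective C) (hS : IsSplittingRule C S) : Injective (splittingCode S) := by
  intro y z hyz
  by_contra hne
  obtain ⟨V, hV, hyV, hzV⟩ := exists_isClopen_of_totally_separated hne
  obtain ⟨n, hn⟩ := hC ⟨V, hV⟩
  have same_address : splittingAddress S y n = splittingAddress S z n := by
    rw [← res_splittingCode, ← res_splittingCode, hyz]
  obtain ⟨hy, hz⟩ := hS.separates n (splittingCell S (splittingAddress S y n))
    y (mem_splittingCell_iff.2 (by rw [length_splittingAddress]))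
    z (mem_splittingCell_iff.2 (by rw [length_splittingAddress, same_address]))
    (by rw [hn]; exact hyV) (by rw [hn]; exact hzV)
  have hcode := congrFun hyz n
  rw [splittingCode, splittingCode, ← same_address, (mem_iff_boolIndicator _ y).1 hy,
    (notMem_iff_boolIndicator _ z).1 hz] at hcode
  exact Bool.noConfusion hcode

theorem IsSplittingRule.surjective_splittingCode [CompactSpace Y] [Nonempty Y]
    (hS : IsSplittingRule C S) : Surjective (splittingCode S) := by
  intro b
  obtain ⟨y, hy⟩ : (⋂ n, (splittingCell S (PiNat.res b n) : Set Y)).Nonempty :=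
    IsCompact.nonempty_iInter_of_sequence_nonempty_isCompact_isClosed _
      (fun n => antitone_splittingCell_res b n.le_succ) (fun n => hS.nonempty_splittingCell _)
      (Clopens.isClopen _).isClosed.isCompact (fun n => (Clopens.isClopen _).isClosed)
  refine ⟨y, PiNat.res_injective (funext fun n => ?_)⟩
  rw [res_splittingCode]
  simpa only [PiNat.res_length] using mem_splittingCell_iff.1 (mem_iInter.1 hy n)

/-- **Brouwer's theorem** characterizing the Cantor space. -/
theorem nonempty_homeomorph_cantorSpace [CompactSpace Y] [T2Space Y] [SecondCountableTopology Y]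
    [TotallyDisconnectedSpace Y] [PerfectSpace Y] [Nonempty Y] : Nonempty (Y ≃ₜ (ℕ → Bool)) := by
  have : Countable (Clopens Y) := Clopens.countable_iff_secondCountable.2 inferInstance
  obtain ⟨C, hC⟩ := exists_surjective_nat (Clopens Y)
  obtain ⟨S, hS⟩ := exists_isSplittingRule C
  let code : Y ≃ (ℕ → Bool) :=
    .ofBijective (splittingCode S) ⟨hS.injective_splittingCode hC, hS.surjective_splittingCode⟩
  exact ⟨continuous_splittingCode.homeoOfEquivCompactToT2 (f := code)⟩

end Brouwer

section Minimal

variable {X Y : Type*} [TopologicalSpace X] [TopologicalSpace Y] {α : X ≃ₜ X} {β : Y ≃ₜ Y}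

namespace IsMinimalHomeo

theorem iUnion_zpow_image_eq_univ (hβ : IsMinimalHomeo β) {V : Set Y} (hV : IsOpen V)
    (hne : V.Nonempty) : ⋃ n : ℤ, ⇑(β ^ n) '' V = univ := by
  set W := ⋃ n : ℤ, ⇑(β ^ n) '' V with hW
  have hWo : IsOpen W := isOpen_iUnion fun n => (β ^ n).isOpenMap V hV
  have hinv : β '' W = W := by
    calc β '' W = ⋃ n : ℤ, ⇑(β ^ (1 + n)) '' V := by
          simp only [hW, image_iUnion, image_image, zpow_one_add]
          rfl
      _ = W := (Equiv.addLeft (1 : ℤ)).surjective.iUnion_comp fun n : ℤ => ⇑(β ^ n) '' V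
  have hVW : V ⊆ W := fun y hy => mem_iUnion.2 ⟨0, y, hy, by simp⟩
  rcases hβ Wᶜ hWo.isClosed_compl (by rw [image_compl_eq β.bijective, hinv]) with h | h
  · exact compl_empty_iff.1 h
  · exact absurd (compl_univ_iff.1 h) (hne.mono hVW).ne_empty

theorem perfectSpace [CompactSpace Y] [Infinite Y] (hβ : IsMinimalHomeo β) : PerfectSpace Y := by
  refine perfectSpace_iff_forall_not_isolated.2 fun y => ⟨fun hy => ?_⟩
  have hopen : IsOpen {y} := (isOpen_singleton_iff_punctured_nhds y).2 hy
  obtain ⟨t, ht⟩ := isCompact_univ.elim_finite_subcover (fun n : ℤ => ⇑(β ^ n) '' {y})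
    (fun n => (β ^ n).isOpenMap _ hopen)
    (hβ.iUnion_zpow_image_eq_univ hopen (singleton_nonempty y)).ge
  exact infinite_univ ((t.finite_toSet.biUnion fun n _ => (finite_singleton y).image _).subset ht)

/-- A nonempty closed invariant set projects onto `X`, so it contains every point alone in its
fibre. -/
theorem of_dense_injective_fibers {π : Y → X} (hα : IsMinimalHomeo α) (hπ : IsClosedMap π)
    (hsemi : Semiconj π β α) (hdense : Dense {y | ∀ z, π z = π y → z = y}) :
    IsMinimalHomeo β := by
  intro F hF hinv
  have image_inv : α '' (π '' F) = π '' F := by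
    conv_rhs => rw [← hinv]
    simp only [image_image, hsemi.eq]
  rcases hα _ (hπ F hF) image_inv with h | h
  · exact .inl (image_eq_empty.1 h)
  · refine .inr (hF.closure_eq ▸ (hdense.mono fun y hy => ?_).closure_eq)
    obtain ⟨z, hz, hzy⟩ : π y ∈ π '' F := h ▸ mem_univ _
    exact hy z hzy ▸ hz

end IsMinimalHomeo

end Minimal

section GraphClosure

variable {X K : Type*} [TopologicalSpace X] [TopologicalSpace K] {φ : X → K} {D : Set X}

theorem comp_snd_eq_of_mem_closure_graphOn {Z : Type*} [TopologicalSpace Z] [T2Space Z] {f : K → Z}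
    (hf : Continuous f) {p : X × K} (hp : p ∈ closure (D.graphOn φ))
    (hφ : ContinuousWithinAt (f ∘ φ) D p.1) : f p.2 = f (φ p.1) := by
  have := mem_closure_iff_nhdsWithin_neBot.1 hp
  have fst_tendsto : Filter.Tendsto Prod.fst (𝓝[D.graphOn φ] p) (𝓝[D] p.1) :=
    continuous_fst.continuousWithinAt.tendsto_nhdsWithin fun q hq => (mem_graphOn.1 hq).1
  have snd_tendsto : Filter.Tendsto (fun q : X × K => f q.2) (𝓝[D.graphOn φ] p) (𝓝 (f p.2)) :=
    (hf.comp continuous_snd).continuousWithinAt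
  refine tendsto_nhds_unique_of_eventuallyEq snd_tendsto (hφ.tendsto.comp fst_tendsto) ?_
  filter_upwards [self_mem_nhdsWithin] with q hq
  exact congrArg f (mem_graphOn.1 hq).2.symm

theorem surjective_fst_closure_graphOn [CompactSpace K] (hD : Dense D) :
    Surjective fun p : closure (D.graphOn φ) => p.1.1 := by
  have hclosed : IsClosed (Prod.fst '' closure (D.graphOn φ)) :=
    isClosedMap_fst_of_compactSpace _ isClosed_closure
  have hsub : D ⊆ Prod.fst '' closure (D.graphOn φ) := fun x hx =>
    ⟨(x, φ x), subset_closure ⟨x, hx, rfl⟩, rfl⟩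
  intro x
  obtain ⟨p, hp, rfl⟩ := closure_minimal hsub hclosed (hD x)
  exact ⟨⟨p, hp⟩, rfl⟩

theorem dense_preimage_fst_closure_graphOn :
    Dense {p : closure (D.graphOn φ) | p.1.1 ∈ D} := by
  rw [Subtype.dense_iff]
  exact closure_mono fun p hp => ⟨⟨p, subset_closure hp⟩, (mem_graphOn.1 hp).1, rfl⟩

theorem isClosedMap_fst_closure_graphOn [CompactSpace K] :
    IsClosedMap fun p : closure (D.graphOn φ) => p.1.1 :=
  isClosedMap_fst_of_compactSpace.comp isClosed_closure.isClosedEmbedding_subtypeVal.isClosedMap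

end GraphClosure

theorem continuousAt_boolIndicator {X : Type*} [TopologicalSpace X] {U : Set X} {x : X}
    (hx : x ∉ frontier U) : ContinuousAt U.boolIndicator x := by
  rw [frontier_eq_closure_inter_closure, mem_inter_iff, not_and_or] at hx
  rcases hx with hx | hx
  · refine continuousAt_const.congr (f := fun _ => false) ?_
    filter_upwards [isClosed_closure.isOpen_compl.mem_nhds hx] with z hz
    exact ((notMem_iff_boolIndicator U z).1 (notMem_of_notMem_closure hz)).symm
  · refine continuousAt_const.congr (f := fun _ => true) ?_
    filter_upwards [isClosed_closure.isOpen_compl.mem_nhds hx] with z hz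
    exact ((mem_iff_boolIndicator U z).1 (notMem_compl_iff.1 (notMem_of_notMem_closure hz))).symm

/-- The action of a group on an invariant subset. -/
def restrictAction {Γ Z : Type*} [Group Γ] [TopologicalSpace Z] (T : Γ →* (Z ≃ₜ Z)) (A : Set Z)
    (hA : ∀ g, MapsTo (T g) A A) : Γ →* (A ≃ₜ A) :=
  .mk' (fun g => (T g).subtype fun z => ⟨fun hz => hA g hz, fun hz => by simpa using hA g⁻¹ hz⟩)
    fun g h => by ext z; simp

/-- Conjugation by a homeomorphism, as a homomorphism between homeomorphism groups. -/
def conjHomeomorph {Y Z : Type*} [TopologicalSpace Y] [TopologicalSpace Z] (e : Y ≃ₜ Z) :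
    (Y ≃ₜ Y) →* (Z ≃ₜ Z) :=
  .mk' (fun f => (e.symm.trans f).trans e) fun f g => by ext z; simp

section SymbolicCover

variable {X ι Γ : Type*} [TopologicalSpace X] [Group Γ] (ρ : Γ →* (X ≃ₜ X)) (U : ι → Set X)

/-- The points whose orbit avoids the boundaries of all the sets `U i`. -/
def regularPoints : Set X := {x | ∀ i g, ρ g x ∉ frontier (U i)}

/-- The symbolic coding of the orbit of `x`, recording for each `i` the times at which it visits
`U i`. -/
noncomputable def itinerary (x : X) : ι × Γ → Bool := fun q => (U q.1).boolIndicator (ρ q.2 x)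

/-- The closure of the graph of the itinerary map over the regular points. Keeping the base point
as a coordinate makes the factor map onto `X` a projection. -/
def symbolicCover : Set (X × (ι × Γ → Bool)) :=
  closure ((regularPoints ρ U).graphOn (itinerary ρ U))

/-- The diagonal action on pairs of a point and an itinerary, which translates the itinerary in
time. -/
def shiftAction : Γ →* (X × (ι × Γ → Bool) ≃ₜ X × (ι × Γ → Bool)) :=
  .mk' (fun h =>
    { toFun p := (ρ h p.1, fun q => p.2 (q.1, q.2 * h))
      invFun p := ((ρ h).symm p.1, fun q => p.2 (q.1, q.2 * h⁻¹))
      left_inv p := by ext <;> simp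
      right_inv p := by ext <;> simp
      continuous_toFun := by fun_prop
      continuous_invFun := by fun_prop })
    fun g h => by ext p <;> simp [mul_assoc]

theorem mapsTo_shiftAction_symbolicCover (h : Γ) :
    MapsTo (shiftAction ρ h) (symbolicCover ρ U) (symbolicCover ρ U) := by
  refine MapsTo.closure ?_ (shiftAction ρ h).continuous
  rintro _ ⟨x, hx, rfl⟩
  refine ⟨ρ h x, fun i g => ?_, Prod.ext rfl (funext fun q => ?_)⟩
  · simpa using hx i (g * h)
  · simp [itinerary, shiftAction]

/-- The action on the symbolic cover lifting the action on `X`. -/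
def symbolicAction : Γ →* (symbolicCover ρ U ≃ₜ symbolicCover ρ U) :=
  restrictAction (shiftAction ρ) (symbolicCover ρ U) (mapsTo_shiftAction_symbolicCover ρ U)

/-- The factor map from the symbolic cover onto `X`. -/
def symbolicProj (p : symbolicCover ρ U) : X := p.1.1

theorem symbolicProj_semiconj (g : Γ) :
    Semiconj (symbolicProj ρ U) (symbolicAction ρ U g) (ρ g) := fun _ => rfl

theorem continuous_symbolicProj : Continuous (symbolicProj ρ U) :=
  continuous_fst.comp continuous_subtype_val

variable {ρ U}

theorem symbolicCover_snd_apply_eq {p : X × (ι × Γ → Bool)} (hp : p ∈ symbolicCover ρ U) {i : ι}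
    {g : Γ} (hi : ρ g p.1 ∉ frontier (U i)) : p.2 (i, g) = itinerary ρ U p.1 (i, g) :=
  comp_snd_eq_of_mem_closure_graphOn (continuous_apply (i, g)) hp
    (((continuousAt_boolIndicator hi).comp (ρ g).continuous.continuousAt).continuousWithinAt)

theorem eq_of_symbolicProj_mem_regularPoints {p q : symbolicCover ρ U}
    (hq : symbolicProj ρ U q ∈ regularPoints ρ U) (hpq : symbolicProj ρ U p = symbolicProj ρ U q) :
    p = q := by
  have hp : symbolicProj ρ U p ∈ regularPoints ρ U := hpq ▸ hq
  refine Subtype.ext (Prod.ext hpq (funext fun ⟨i, g⟩ => ?_))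
  rw [symbolicCover_snd_apply_eq q.2 (hq i g), symbolicCover_snd_apply_eq p.2 (hp i g)]
  exact congrArg (itinerary ρ U · (i, g)) hpq

theorem isMinimalHomeo_symbolicAction {a : Γ} (hmin : IsMinimalHomeo (ρ a)) :
    IsMinimalHomeo (symbolicAction ρ U a) :=
  hmin.of_dense_injective_fibers isClosedMap_fst_closure_graphOn (symbolicProj_semiconj ρ U a) <|
    dense_preimage_fst_closure_graphOn.mono fun _ hp _ hq =>
      eq_of_symbolicProj_mem_regularPoints hp hq

theorem injective_snd_symbolicCover
    (hsep : Pairwise fun x x' => ∃ i, U i ∈ 𝓝 x ∧ (U i)ᶜ ∈ 𝓝 x') :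
    Injective fun p : symbolicCover ρ U => p.1.2 := by
  intro p q (hpq : p.1.2 = q.1.2)
  refine Subtype.ext (Prod.ext ?_ hpq)
  by_contra hne
  obtain ⟨i, hp, hq⟩ := hsep hne
  have hp_frontier : p.1.1 ∉ frontier (U i) := fun h => h.2 (mem_interior_iff_mem_nhds.2 hp)
  have hq_frontier : q.1.1 ∉ frontier (U i) := by
    rw [← frontier_compl]
    exact fun h => h.2 (mem_interior_iff_mem_nhds.2 hq)
  have hp_true : p.1.2 (i, 1) = true := by
    rw [symbolicCover_snd_apply_eq p.2 (by simpa using hp_frontier)]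
    simpa [itinerary] using (mem_iff_boolIndicator _ _).1 (mem_of_mem_nhds hp)
  have hq_false : q.1.2 (i, 1) = false := by
    rw [symbolicCover_snd_apply_eq q.2 (by simpa using hq_frontier)]
    simpa [itinerary] using (notMem_iff_boolIndicator _ _).1 (mem_of_mem_nhds hq)
  rw [hpq, hq_false] at hp_true
  exact Bool.noConfusion hp_true

theorem nonempty_symbolicCover_homeomorph_cantorSpace [CompactSpace X] [Infinite X] [Countable ι]
    [Countable Γ] (hdense : Dense (regularPoints ρ U))
    (hsep : Pairwise fun x x' => ∃ i, U i ∈ 𝓝 x ∧ (U i)ᶜ ∈ 𝓝 x') {a : Γ}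
    (hmin : IsMinimalHomeo (ρ a)) : Nonempty (symbolicCover ρ U ≃ₜ (ℕ → Bool)) := by
  have : CompactSpace (symbolicCover ρ U) :=
    isCompact_iff_compactSpace.1 isClosed_closure.isCompact
  have : Infinite (symbolicCover ρ U) := .of_surjective _ (surjective_fst_closure_graphOn hdense)
  have : PerfectSpace (symbolicCover ρ U) := (isMinimalHomeo_symbolicAction hmin).perfectSpace
  have hsnd : IsEmbedding fun p : symbolicCover ρ U => p.1.2 :=
    ((continuous_snd.comp continuous_subtype_val).isClosedEmbedding
      (injective_snd_symbolicCover hsep)).isEmbedding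
  have := hsnd.t2Space
  have := hsnd.secondCountableTopology
  have : TotallyDisconnectedSpace (symbolicCover ρ U) :=
    hsnd.isTotallyDisconnected_range.1 (isTotallyDisconnected_of_totallyDisconnectedSpace _)
  exact nonempty_homeomorph_cantorSpace

theorem exists_minimal_cantorSpace_extension [CompactSpace X] [Infinite X] [Countable ι]
    [Countable Γ] (hdense : Dense (regularPoints ρ U))
    (hsep : Pairwise fun x x' => ∃ i, U i ∈ 𝓝 x ∧ (U i)ᶜ ∈ 𝓝 x') {a : Γ}
    (hmin : IsMinimalHomeo (ρ a)) :
    ∃ (β : Γ →* ((ℕ → Bool) ≃ₜ (ℕ → Bool))) (s : C(ℕ → Bool, X)), IsMinimalHomeo (β a) ∧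
      Surjective s ∧ (∀ g, Semiconj s (β g) (ρ g)) ∧ ∀ x ∈ regularPoints ρ U, ∃! y, s y = x := by
  obtain ⟨e⟩ := nonempty_symbolicCover_homeomorph_cantorSpace hdense hsep hmin
  have hsurj : Surjective (symbolicProj ρ U ∘ e.symm) :=
    (surjective_fst_closure_graphOn hdense).comp e.symm.surjective
  refine ⟨(conjHomeomorph e).comp (symbolicAction ρ U),
    ⟨_, (continuous_symbolicProj ρ U).comp e.symm.continuous⟩, ?_, hsurj, fun g y => ?_, ?_⟩
  · refine (isMinimalHomeo_symbolicAction hmin).of_dense_injective_fibers e.symm.isClosedMap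
      (fun y => by simp [conjHomeomorph]) ?_
    simp [dense_univ]
  · simp [conjHomeomorph, (symbolicProj_semiconj ρ U g).eq]
  · intro x hx
    obtain ⟨y, rfl⟩ := hsurj x
    exact ⟨y, rfl, fun z hz => e.symm.injective (eq_of_symbolicProj_mem_regularPoints hx hz)⟩

end SymbolicCover

section InvariantMeasures

variable {X : Type*} [TopologicalSpace X] [MeasurableSpace X] [BorelSpace X] {μ : Measure X}

theorem measurePreserving_iff_measure_image (f : X ≃ₜ X) :
    MeasurePreserving f μ μ ↔ ∀ E, MeasurableSet E → μ (f '' E) = μ E := by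
  constructor
  · intro hf E hE
    have himage : MeasurableSet (f '' E) := f.measurableEmbedding.measurableSet_image' hE
    rw [← hf.measure_preimage himage.nullMeasurableSet, preimage_image_eq E f.injective]
  · intro hf
    refine ⟨f.continuous.measurable, Measure.ext fun E hE => ?_⟩
    rw [Measure.map_apply f.continuous.measurable hE, ← hf _ (f.continuous.measurable hE),
      image_preimage_eq E f.surjective]

variable (μ) in
/-- The group of homeomorphisms preserving the measure `μ`. -/
def measurePreservingHomeos : Subgroup (X ≃ₜ X) where
  carrier := {f | MeasurePreserving f μ μ}
  one_mem' := .id μ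
  mul_mem' hf hg := hf.comp hg
  inv_mem' {f} hf := hf.symm f.toMeasurableEquiv

theorem IsMinimalHomeo.isOpenPosMeasure [NeZero μ] {β : X ≃ₜ X} (hβ : IsMinimalHomeo β)
    (hμ : MeasurePreserving β μ μ) : μ.IsOpenPosMeasure where
  open_pos V hV hne hnull := by
    have translate_null (n : ℤ) : μ (⇑(β ^ n) '' V) = 0 := by
      have hn : β ^ n ∈ measurePreservingHomeos μ := zpow_mem (K := measurePreservingHomeos μ) hμ n
      rw [(measurePreserving_iff_measure_image (β ^ n)).1 hn V hV.measurableSet, hnull]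
    refine NeZero.ne μ (Measure.measure_univ_eq_zero.1 ?_)
    rw [← hβ.iUnion_zpow_image_eq_univ hV hne, measure_iUnion_null translate_null]

end InvariantMeasures

theorem ae_mem_regularPoints {X Γ ι : Type*} [TopologicalSpace X] [MeasurableSpace X]
    {μ : Measure X} [Group Γ] [Countable Γ] [Countable ι] {ρ : Γ →* (X ≃ₜ X)} {U : ι → Set X}
    (hρ : ∀ g, MeasurePreserving (ρ g) μ μ) (hU : ∀ i, μ (frontier (U i)) = 0) :
    ∀ᵐ x ∂μ, x ∈ regularPoints ρ U :=
  ae_all_iff.2 fun i => ae_all_iff.2 fun g =>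
    (hρ g).quasiMeasurePreserving.ae (measure_eq_zero_iff_ae_notMem.1 (hU i))

theorem exists_separating_null_frontier {X : Type*} [MetricSpace X] [SeparableSpace X]
    [MeasurableSpace X] [OpensMeasurableSpace X] (μ : Measure X) [SigmaFinite μ] :
    ∃ U : ℕ × ℕ → Set X, (∀ i, μ (frontier (U i)) = 0) ∧
      Pairwise fun x x' => ∃ i, U i ∈ 𝓝 x ∧ (U i)ᶜ ∈ 𝓝 x' := by
  rcases isEmpty_or_nonempty X with _ | _
  · exact ⟨fun _ => ∅, by simp, fun x => isEmptyElim x⟩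
  have exists_radius (i : ℕ × ℕ) : ∃ r ∈ Ioo (1 / (2 * ((i.2 : ℝ) + 1))) (1 / ((i.2 : ℝ) + 1)),
      μ (frontier (Metric.ball (denseSeq X i.1) r)) = 0 := by
    simp only [← Metric.thickening_singleton]
    refine exists_null_frontier_thickening μ _ (one_div_lt_one_div_of_lt (by positivity) ?_)
    linarith [Nat.cast_nonneg (α := ℝ) i.2]
  choose r hr hnull using exists_radius
  refine ⟨fun i => Metric.ball (denseSeq X i.1) (r i), hnull, fun x x' hne => ?_⟩
  obtain ⟨k, hk⟩ := exists_nat_one_div_lt (half_pos (dist_pos.2 hne))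
  obtain ⟨n, hn⟩ : ∃ n, dist x (denseSeq X n) < 1 / (2 * ((k : ℝ) + 1)) :=
    (denseRange_denseSeq X).exists_dist_lt x (by positivity)
  have hx : dist x (denseSeq X n) < r (n, k) := hn.trans (hr (n, k)).1
  have hx' : r (n, k) < dist x' (denseSeq X n) := by
    linarith [(hr (n, k)).2, dist_triangle_right x x' (denseSeq X n)]
  exact ⟨(n, k), Metric.isOpen_ball.mem_nhds hx, Filter.mem_of_superset
    (Metric.isClosed_closedBall.isOpen_compl.mem_nhds (not_le.2 hx'))
    (compl_subset_compl.2 Metric.ball_subset_closedBall)⟩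

section LiftOfMeasures

variable {X Y : Type*} [MeasurableSpace X] [MeasurableSpace.CountablySeparated X]
  [MeasurableSpace Y] [StandardBorelSpace Y] {s : Y → X} {D : Set X}

theorem measure_eq_map_image_of_injOn {ν : Measure Y} (hs : Measurable s) (hD : MeasurableSet D)
    (hinj : InjOn s (s ⁻¹' D)) (hν : ∀ᵐ x ∂ν.map s, x ∈ D) {E : Set Y} (hE : MeasurableSet E) :
    ν E = ν.map s (s '' (E ∩ s ⁻¹' D)) := by
  have image_meas : MeasurableSet (s '' (E ∩ s ⁻¹' D)) :=
    (hE.inter (hs hD)).image_of_measurable_injOn hs (hinj.mono inter_subset_right)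
  have preimage_image : s ⁻¹' (s '' (E ∩ s ⁻¹' D)) = E ∩ s ⁻¹' D := by
    refine (subset_preimage_image s _).antisymm' ?_
    rintro y ⟨z, hz, hzy⟩
    have hy : s y ∈ D := hzy ▸ hz.2
    exact hinj hz.2 hy hzy ▸ hz
  rw [Measure.map_apply hs image_meas, preimage_image]
  exact (measure_inter_conull (ae_of_ae_map hs.aemeasurable hν)).symm

theorem exists_map_eq_of_injOn {μ : Measure X} (hs : Measurable s) (hD : MeasurableSet D)
    (hinj : InjOn s (s ⁻¹' D)) (hsurj : D ⊆ range s) (hμ : ∀ᵐ x ∂μ, x ∈ D) :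
    ∃ ν : Measure Y, ν.map s = μ := by
  have := (hs hD).standardBorel
  have hemb : MeasurableEmbedding (s ∘ ((↑) : s ⁻¹' D → Y)) :=
    (hs.comp measurable_subtype_coe).measurableEmbedding (injOn_iff_injective.1 hinj)
  refine ⟨(μ.comap (s ∘ (↑))).map ((↑) : s ⁻¹' D → Y), ?_⟩
  rw [Measure.map_map hs measurable_subtype_coe, hemb.map_comap, range_comp, Subtype.range_coe,
    image_preimage_eq_of_subset hsurj, Measure.restrict_eq_self_of_ae_mem hμ]

theorem existsUnique_map_eq {μ : Measure X} (hs : Measurable s)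
    (hfiber : ∀ᵐ x ∂μ, ∃! y, s y = x) : ∃! ν : Measure Y, ν.map s = μ := by
  obtain ⟨N, hsub, hN, hnull⟩ := exists_measurable_superset_of_null hfiber
  obtain ⟨D, hD, hμ, hDsub⟩ : ∃ D, MeasurableSet D ∧ (∀ᵐ x ∂μ, x ∈ D) ∧ ∀ x ∈ D, ∃! y, s y = x :=
    ⟨Nᶜ, hN.compl, measure_eq_zero_iff_ae_notMem.1 hnull, fun x hx => compl_subset_comm.1 hsub hx⟩
  have hinj : InjOn s (s ⁻¹' D) := fun y hy z _ hyz => (hDsub _ hy).unique rfl hyz.symm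
  obtain ⟨ν, hν⟩ := exists_map_eq_of_injOn hs hD hinj (fun x hx => (hDsub x hx).exists) hμ
  refine ⟨ν, hν, fun ν' hν' => Measure.ext fun E hE => ?_⟩
  rw [measure_eq_map_image_of_injOn hs hD hinj (by rwa [hν']) hE,
    measure_eq_map_image_of_injOn hs hD hinj (by rwa [hν]) hE, hν, hν']

end LiftOfMeasures

theorem exists_uniquelyErgodic_cantorSpace_extension {X Γ : Type*} [MetricSpace X] [CompactSpace X]
    [Infinite X] [MeasurableSpace X] [BorelSpace X] [Group Γ] [Countable Γ] {ρ : Γ →* (X ≃ₜ X)}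
    {a : Γ} (hmin : IsMinimalHomeo (ρ a)) {μ : Measure X} [IsProbabilityMeasure μ]
    (hinv : ∀ g, MeasurePreserving (ρ g) μ μ)
    (huniq : ∀ μ' : Measure X, IsProbabilityMeasure μ' → MeasurePreserving (ρ a) μ' μ' → μ' = μ) :
    ∃ (β : Γ →* ((ℕ → Bool) ≃ₜ (ℕ → Bool))) (ν : Measure (ℕ → Bool)) (s : C(ℕ → Bool, X)),
      IsMinimalHomeo (β a) ∧ IsProbabilityMeasure ν ∧ (∀ g, MeasurePreserving (β g) ν ν) ∧
      (∀ ν' : Measure (ℕ → Bool), IsProbabilityMeasure ν' → MeasurePreserving (β a) ν' ν' →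
        ν' = ν) ∧
      Surjective s ∧ (∀ g, Semiconj s (β g) (ρ g)) ∧ ν.map s = μ := by
  have := hmin.isOpenPosMeasure (hinv a)
  obtain ⟨U, hnull, hsep⟩ := exists_separating_null_frontier μ
  have hreg : ∀ᵐ x ∂μ, x ∈ regularPoints ρ U := ae_mem_regularPoints hinv hnull
  obtain ⟨β, s, hβmin, hsurj, hsemi, hfiber⟩ :=
    exists_minimal_cantorSpace_extension (Measure.dense_of_ae hreg) hsep hmin
  have hs : Measurable s := s.continuous.measurable
  have hβ (g : Γ) : Measurable (β g) := (β g).continuous.measurable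
  obtain ⟨ν, hν, lift_unique⟩ := existsUnique_map_eq hs (hreg.mono hfiber)
  have hβinv (g : Γ) : (ν.map (β g)).map s = μ := by
    rw [Measure.map_map hs (hβ g), (hsemi g).comp_eq,
      ← Measure.map_map (ρ g).continuous.measurable hs, hν, (hinv g).map_eq]
  have hβuniq (ν' : Measure (ℕ → Bool)) (_ : IsProbabilityMeasure ν')
      (hν' : MeasurePreserving (β a) ν' ν') : ν'.map s = μ :=
    huniq _ (Measure.isProbabilityMeasure_map hs.aemeasurable)
      ((hs.measurePreserving ν').of_semiconj hν' (hsemi a) (ρ a).continuous.measurable)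
  have : IsProbabilityMeasure (ν.map s) := hν ▸ inferInstance
  exact ⟨β, ν, s, hβmin, Measure.isProbabilityMeasure_of_map s,
    fun g => ⟨hβ g, lift_unique _ (hβinv g)⟩, fun ν' h h' => lift_unique _ (hβuniq ν' h h'),
    hsurj, hsemi, hν⟩

theorem stmt_6_general {X ι : Type*} [MetricSpace X] [CompactSpace X] [Infinite X]
    [MeasurableSpace X] [BorelSpace X] [Countable ι] (α : ι → X ≃ₜ X) (i₀ : ι)
    (hmin : IsMinimalHomeo (α i₀)) (μ : Measure X) [IsProbabilityMeasure μ]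
    (hinv : ∀ (j : ι) (E : Set X), MeasurableSet E → μ (α j '' E) = μ E)
    (hue : ∀ μ' : Measure X, IsProbabilityMeasure μ' →
      (∀ E : Set X, MeasurableSet E → μ' (α i₀ '' E) = μ' E) → μ' = μ) :
    ∃ (Y : CompactMetricBundle) (β : ι → Y.carrier ≃ₜ Y.carrier)
      (ν : Measure Y.carrier) (s : C(Y.carrier, X)),
      Nonempty (Y.carrier ≃ₜ (ℕ → Bool)) ∧
      (∀ v w : FreeGroup ι, FreeGroup.lift α v = FreeGroup.lift α w →
        FreeGroup.lift β v = FreeGroup.lift β w) ∧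
      IsMinimalHomeo (β i₀) ∧
      IsProbabilityMeasure ν ∧
      (∀ (j : ι) (E : Set Y.carrier), MeasurableSet E → ν (β j '' E) = ν E) ∧
      (∀ ν' : Measure Y.carrier, IsProbabilityMeasure ν' →
        (∀ E : Set Y.carrier, MeasurableSet E → ν' (β i₀ '' E) = ν' E) → ν' = ν) ∧
      Surjective s ∧
      (∀ (j : ι) (y : Y.carrier), s (β j y) = α j (s y)) ∧
      ν.map s = μ := by
  simp only [← measurePreserving_iff_measure_image] at hinv hue ⊢
  let π := (FreeGroup.lift α).rangeRestrict
  have hπ (j : ι) : (π (.of j) : X ≃ₜ X) = α j := FreeGroup.lift_apply_of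
  have : Countable (FreeGroup.lift α).range := (MonoidHom.rangeRestrict_surjective _).countable
  have range_preserving : (FreeGroup.lift α).range ≤ measurePreservingHomeos μ :=
    FreeGroup.range_lift_le (range_subset_iff.2 hinv)
  obtain ⟨B, ν, s, hBmin, hν, hBinv, hBue, hsurj, hsemi, hmap⟩ :=
    exists_uniquelyErgodic_cantorSpace_extension (ρ := (FreeGroup.lift α).range.subtype)
      (a := π (.of i₀)) (by simpa [hπ] using hmin) (fun g => range_preserving g.2)
      (by simpa [hπ] using hue)
  have lift_eq : FreeGroup.lift (fun j => B (π (.of j))) = B.comp π :=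
    FreeGroup.ext_hom _ _ fun j => by simp
  let := metrizableSpaceMetric (ℕ → Bool)
  refine ⟨⟨ℕ → Bool⟩, fun j => B (π (.of j)), ν, s, ⟨.refl _⟩, fun v w hvw => ?_, hBmin, hν,
    fun j => hBinv _, hBue, hsurj, fun j y => ?_, hmap⟩
  · rw [lift_eq, MonoidHom.comp_apply, MonoidHom.comp_apply, show π v = π w from Subtype.ext hvw]
  · rw [(hsemi _).eq, Subgroup.coe_subtype, hπ]

/-- Corollary 3.3 (uniquely ergodic case): if moreover `μ` is the unique
`α₁`-invariant Borel probability measure, the Cantor extension can be taken so that `ν`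
is the unique `β₁`-invariant Borel probability measure. -/
theorem stmt_6 {X : Type*} [MetricSpace X] [CompactSpace X] [Infinite X]
    [MeasurableSpace X] [BorelSpace X]
    (d : ℕ) (hd : 0 < d) (α : Fin d → X ≃ₜ X)
    (hcomm : ∀ i j : Fin d, ∀ x : X, α i (α j x) = α j (α i x))
    (hmin : IsMinimalHomeo (α ⟨0, hd⟩))
    (μ : Measure X) [IsProbabilityMeasure μ]
    (hpos : ∀ U : Set X, IsOpen U → U.Nonempty → 0 < μ U)
    (hinv : ∀ (j : Fin d) (E : Set X), MeasurableSet E → μ ((α j) '' E) = μ E)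
    (hue : ∀ μ' : Measure X, IsProbabilityMeasure μ' →
      (∀ E : Set X, MeasurableSet E → μ' ((α ⟨0, hd⟩) '' E) = μ' E) → μ' = μ) :
    ∃ (Y : CompactMetricBundle) (β : Fin d → Y.carrier ≃ₜ Y.carrier)
      (ν : Measure Y.carrier) (s : C(Y.carrier, X)),
      Nonempty (Y.carrier ≃ₜ (ℕ → Bool)) ∧
      (∀ i j : Fin d, ∀ y : Y.carrier, β i (β j y) = β j (β i y)) ∧
      IsMinimalHomeo (β ⟨0, hd⟩) ∧
      IsProbabilityMeasure ν ∧
      (∀ (j : Fin d) (E : Set Y.carrier), MeasurableSet E → ν ((β j) '' E) = ν E) ∧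
      (∀ ν' : Measure Y.carrier, IsProbabilityMeasure ν' →
        (∀ E : Set Y.carrier, MeasurableSet E → ν' ((β ⟨0, hd⟩) '' E) = ν' E) → ν' = ν) ∧
      Function.Surjective s ∧
      (∀ (j : Fin d) (y : Y.carrier), s (β j y) = α j (s y)) ∧
      Measure.map s ν = μ := by
  obtain ⟨Y, β, ν, s, hY, hrel, hrest⟩ := stmt_6_general α ⟨0, hd⟩ hmin μ hinv hue
  refine ⟨Y, β, ν, s, hY, fun i j y => ?_, hrest⟩
  have hβ := hrel (.of i * .of j) (.of j * .of i) (by ext x; simpa using hcomm i j x)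
  simpa using DFunLike.congr_fun hβ y
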